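/- arXiv:1406.1821 — 2 statements merged into one kernel-verified Lean document; each statement's English description precedes it below -/
import Mathlib

section
/- Let U ⊆ ℂ be a nonempty open connected set, and let f, g : ℂ → ℂ be complex analytic on a neighborhood of each point of U, with deriv f z ≠ 0 and deriv g z ≠ 0 for all z ∈ U. If f and g have equal Schwarzian derivatives on U, i.e. Sf(z) = Sg(z) for all z ∈ U, then g differs from f by post-composition with a Möbius transformation: there exist a, b, c, d ∈ ℂ with a·d − b·c ≠ 0 such that for every z ∈ U, c·f(z) + d ≠ 0 and g(z) = (a·f(z) + b)/(c·f(z) + d). -/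
/-!
The logarithmic derivative `P f = f'' / f'` of `f'` satisfies the Riccati equation
`(P f)' = S f + (P f)² / 2`. If `S f = S g`, subtracting the equations of `f` and `g` shows that
`h = (P f - P g) / 2` satisfies `h' = h (P f + P g) / 2`. Hence `h² / (f' g')` is a constant `K`,
and `h` vanishes either identically or nowhere.

If `h = 0`, then `f'` and `g'` are proportional, so `g` is an affine function of `f`.

If `h` has no zero, substitute `P g = P f - 2 h` to get the Bernoulli equation `h' = h P f - h²`,
which says `(f' / h)' = f'`. So `f' / h = f - p` for a constant `p`, and symmetrically
`-g' / h = g - q`. Multiplying, `(f - p) (g - q) = -f' g' / h² = -1 / K`, a Möbius relation with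
pole `p` and value `q` at infinity. No square root of `f'` is taken: none need exist when `U` is
not simply connected.
-/

/-- The Schwarzian derivative of `f` at `z`:
`Sf(z) = f'''(z)/f'(z) − (3/2)·(f''(z)/f'(z))²`. -/
noncomputable def schwarzian (f : ℂ → ℂ) (z : ℂ) : ℂ :=
  deriv (deriv (deriv f)) z / deriv f z - (3 / 2) * (deriv (deriv f) z / deriv f z) ^ 2

open Set

section NormedField

variable {𝕜 : Type*} [NontriviallyNormedField 𝕜]

/-- The pre-Schwarzian derivative `f'' / f'`, encoded as the logarithmic derivative of `f'`; it is
`0` where `f'` vanishes. -/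
noncomputable def preSchwarzian (f : 𝕜 → 𝕜) : 𝕜 → 𝕜 :=
  logDeriv (deriv f)

lemma hasDerivAt_div_of_bernoulli {u v : 𝕜 → 𝕜} {z : 𝕜} (hv : DifferentiableAt 𝕜 v z)
    (hvz : v z ≠ 0) (huz : u z ≠ 0) (hu : HasDerivAt u (u z * logDeriv v z - u z ^ 2) z) :
    HasDerivAt (fun w ↦ v w / u w) (v z) z := by
  refine (hv.hasDerivAt.fun_div hu huz).congr_deriv ?_
  rw [logDeriv_apply]
  field

end NormedField

section RCLike

variable {𝕜 : Type*} [RCLike 𝕜] {U : Set 𝕜}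

lemma exists_pow_eq_const_mul {u v : 𝕜 → 𝕜} {n : ℕ} (hU : IsOpen U) (hUc : IsPreconnected U)
    (hn : n ≠ 0) (hu : DifferentiableOn 𝕜 u U) (hv : DifferentiableOn 𝕜 v U)
    (hv₀ : ∀ z ∈ U, v z ≠ 0) (huv : ∀ z ∈ U, n * deriv u z = u z * logDeriv v z) :
    ∃ K, ∀ z ∈ U, u z ^ n = K * v z := by
  have deriv_eq_zero : EqOn (deriv fun z ↦ u z ^ n / v z) 0 U := fun z hz ↦ by
    have hu' := (hu.differentiableAt (hU.mem_nhds hz)).hasDerivAt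
    have hv' := (hv.differentiableAt (hU.mem_nhds hz)).hasDerivAt
    have hvz := hv₀ z hz
    have hn' : n * deriv u z * v z = u z * deriv v z := by
      rw [huv z hz, logDeriv_apply]
      field
    rw [((hu'.fun_pow n).fun_div hv' hvz).deriv, Pi.zero_apply, div_eq_zero_iff]
    left
    rw [← mul_pow_sub_one hn (u z)]
    linear_combination u z ^ (n - 1) * hn'
  obtain ⟨K, hK⟩ :=
    hU.exists_is_const_of_deriv_eq_zero hUc ((hu.pow n).fun_div hv hv₀) deriv_eq_zero
  exact ⟨K, fun z hz ↦ (div_eq_iff (hv₀ z hz)).mp (hK z hz)⟩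

lemma exists_eqOn_affine_of_preSchwarzian_eqOn {f g : 𝕜 → 𝕜} (hU : IsOpen U)
    (hUc : IsPreconnected U) (hf : DifferentiableOn 𝕜 f U) (hg : DifferentiableOn 𝕜 g U)
    (hdf : DifferentiableOn 𝕜 (deriv f) U) (hdg : DifferentiableOn 𝕜 (deriv g) U)
    (hf' : ∀ z ∈ U, deriv f z ≠ 0) (hg' : ∀ z ∈ U, deriv g z ≠ 0)
    (hP : EqOn (preSchwarzian f) (preSchwarzian g) U) :
    ∃ a b, a ≠ 0 ∧ EqOn g (fun z ↦ a * f z + b) U := by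
  obtain ⟨a, ha, hga⟩ := (logDeriv_eqOn_iff hdg hdf hU hUc hf' hg').mp hP.symm
  have deriv_eq : EqOn (deriv g) (deriv fun z ↦ a * f z) U := fun z hz ↦ by
    rw [hga hz, deriv_const_mul a (hf.differentiableAt (hU.mem_nhds hz)), Pi.smul_apply,
      smul_eq_mul]
  obtain ⟨b, hb⟩ := hU.exists_eq_add_of_deriv_eq hUc hg (hf.const_mul a) deriv_eq
  exact ⟨a, b, ha, hb⟩

lemma exists_eqOn_deriv_div_add_of_bernoulli {f h : 𝕜 → 𝕜} (hU : IsOpen U)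
    (hUc : IsPreconnected U) (hf : DifferentiableOn 𝕜 f U)
    (hdf : DifferentiableOn 𝕜 (deriv f) U) (hf' : ∀ z ∈ U, deriv f z ≠ 0)
    (hh₀ : ∀ z ∈ U, h z ≠ 0)
    (hh : ∀ z ∈ U, HasDerivAt h (h z * preSchwarzian f z - h z ^ 2) z) :
    ∃ p, EqOn f (fun z ↦ deriv f z / h z + p) U := by
  have hderiv : ∀ z ∈ U, HasDerivAt (fun w ↦ deriv f w / h w) (deriv f z) z := fun z hz ↦
    hasDerivAt_div_of_bernoulli (hdf.differentiableAt (hU.mem_nhds hz)) (hf' z hz) (hh₀ z hz)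
      (hh z hz)
  exact hU.exists_eq_add_of_deriv_eq hUc hf
    (fun z hz ↦ (hderiv z hz).differentiableAt.differentiableWithinAt)
    (fun z hz ↦ (hderiv z hz).deriv.symm)

end RCLike

lemma eq_mobius_of_sub_mul_sub_eq {F : Type*} [Field F] {x y p q k : F} (hk : k ≠ 0)
    (h : (x - p) * (y - q) = k) :
    1 * x + -p ≠ 0 ∧ y = (q * x + (k - p * q)) / (1 * x + -p) := by
  have hx : 1 * x + -p ≠ 0 := by
    rw [one_mul, ← sub_eq_add_neg]
    exact left_ne_zero_of_mul (h ▸ hk)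
  refine ⟨hx, ?_⟩
  rw [eq_div_iff hx]
  linear_combination h

section Schwarzian

variable {f g : ℂ → ℂ} {z : ℂ} {U : Set ℂ}

lemma hasDerivAt_preSchwarzian (hdf : DifferentiableAt ℂ (deriv f) z)
    (hddf : DifferentiableAt ℂ (deriv (deriv f)) z) (hf' : deriv f z ≠ 0) :
    HasDerivAt (preSchwarzian f) (schwarzian f z + preSchwarzian f z ^ 2 / 2) z := by
  refine (hddf.hasDerivAt.div hdf.hasDerivAt hf').congr_deriv ?_
  rw [schwarzian, preSchwarzian, logDeriv_apply]
  field

lemma hasDerivAt_preSchwarzian_sub_div_two (hf : AnalyticAt ℂ f z) (hg : AnalyticAt ℂ g z)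
    (hf' : deriv f z ≠ 0) (hg' : deriv g z ≠ 0) (hS : schwarzian f z = schwarzian g z) :
    HasDerivAt (fun w ↦ (preSchwarzian f w - preSchwarzian g w) / 2)
      ((preSchwarzian f z ^ 2 - preSchwarzian g z ^ 2) / 4) z := by
  have hPf := hasDerivAt_preSchwarzian hf.deriv.differentiableAt hf.deriv.deriv.differentiableAt hf'
  have hPg := hasDerivAt_preSchwarzian hg.deriv.differentiableAt hg.deriv.deriv.differentiableAt hg'
  refine ((hPf.fun_sub hPg).div_const 2).congr_deriv ?_
  rw [hS]
  ring

lemma exists_preSchwarzian_sub_div_two_sq_eq (hU : IsOpen U) (hUc : IsPreconnected U)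
    (hf : AnalyticOnNhd ℂ f U) (hg : AnalyticOnNhd ℂ g U)
    (hf' : ∀ z ∈ U, deriv f z ≠ 0) (hg' : ∀ z ∈ U, deriv g z ≠ 0)
    (hS : EqOn (schwarzian f) (schwarzian g) U) :
    ∃ K, ∀ z ∈ U,
      ((preSchwarzian f z - preSchwarzian g z) / 2) ^ 2 = K * (deriv f z * deriv g z) := by
  have hh : ∀ z ∈ U, HasDerivAt (fun w ↦ (preSchwarzian f w - preSchwarzian g w) / 2)
      ((preSchwarzian f z ^ 2 - preSchwarzian g z ^ 2) / 4) z := fun z hz ↦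
    hasDerivAt_preSchwarzian_sub_div_two (hf z hz) (hg z hz) (hf' z hz) (hg' z hz) (hS hz)
  refine exists_pow_eq_const_mul hU hUc two_ne_zero
    (fun z hz ↦ (hh z hz).differentiableAt.differentiableWithinAt)
    (hf.deriv.differentiableOn.fun_mul hg.deriv.differentiableOn)
    (fun z hz ↦ mul_ne_zero (hf' z hz) (hg' z hz)) fun z hz ↦ ?_
  rw [(hh z hz).deriv, logDeriv_mul z (hf' z hz) (hg' z hz) (hf z hz).deriv.differentiableAt
    (hg z hz).deriv.differentiableAt, ← preSchwarzian, ← preSchwarzian]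
  push_cast
  ring

lemma exists_eqOn_deriv_div_preSchwarzian_sub_add (hU : IsOpen U) (hUc : IsPreconnected U)
    (hf : AnalyticOnNhd ℂ f U) (hg : AnalyticOnNhd ℂ g U)
    (hf' : ∀ z ∈ U, deriv f z ≠ 0) (hg' : ∀ z ∈ U, deriv g z ≠ 0)
    (hS : EqOn (schwarzian f) (schwarzian g) U)
    (hP : ∀ z ∈ U, preSchwarzian f z ≠ preSchwarzian g z) :
    ∃ p, EqOn f (fun z ↦ deriv f z / ((preSchwarzian f z - preSchwarzian g z) / 2) + p) U := by
  refine exists_eqOn_deriv_div_add_of_bernoulli hU hUc hf.differentiableOn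
    hf.deriv.differentiableOn hf' (fun z hz ↦ div_ne_zero (sub_ne_zero.mpr (hP z hz)) two_ne_zero)
    fun z hz ↦ ?_
  refine (hasDerivAt_preSchwarzian_sub_div_two (hf z hz) (hg z hz) (hf' z hz) (hg' z hz)
    (hS hz)).congr_deriv ?_
  ring

lemma exists_sub_mul_sub_eq_neg_inv {K : ℂ} (hU : IsOpen U) (hUc : IsPreconnected U)
    (hf : AnalyticOnNhd ℂ f U) (hg : AnalyticOnNhd ℂ g U)
    (hf' : ∀ z ∈ U, deriv f z ≠ 0) (hg' : ∀ z ∈ U, deriv g z ≠ 0)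
    (hS : EqOn (schwarzian f) (schwarzian g) U) (hK₀ : K ≠ 0)
    (hK : ∀ z ∈ U,
      ((preSchwarzian f z - preSchwarzian g z) / 2) ^ 2 = K * (deriv f z * deriv g z)) :
    ∃ p q, ∀ z ∈ U, (f z - p) * (g z - q) = -K⁻¹ := by
  have hP : ∀ z ∈ U, preSchwarzian f z ≠ preSchwarzian g z := fun z hz hPz ↦ by
    have hne := mul_ne_zero hK₀ (mul_ne_zero (hf' z hz) (hg' z hz))
    rw [← hK z hz, hPz] at hne
    simp at hne
  obtain ⟨p, hp⟩ := exists_eqOn_deriv_div_preSchwarzian_sub_add hU hUc hf hg hf' hg' hS hP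
  obtain ⟨q, hq⟩ := exists_eqOn_deriv_div_preSchwarzian_sub_add hU hUc hg hf hg' hf' hS.symm
    fun z hz ↦ (hP z hz).symm
  refine ⟨p, q, fun z hz ↦ ?_⟩
  have hfz := hf' z hz
  have hgz := hg' z hz
  calc (f z - p) * (g z - q)
      = deriv f z / ((preSchwarzian f z - preSchwarzian g z) / 2) *
          (deriv g z / ((preSchwarzian g z - preSchwarzian f z) / 2)) := by
        rw [sub_eq_of_eq_add (hp hz), sub_eq_of_eq_add (hq hz)]
    _ = -(deriv f z * deriv g z / ((preSchwarzian f z - preSchwarzian g z) / 2) ^ 2) := by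
        rw [← neg_sub (preSchwarzian f z), neg_div, div_neg, mul_neg, div_mul_div_comm, sq]
    _ = -K⁻¹ := by
        rw [hK z hz]
        field

end Schwarzian

/-- Two locally injective holomorphic functions on a connected open set with equal
Schwarzian derivatives differ by post-composition with a Möbius transformation. -/
theorem eq_schwarzian_iff_mobius (U : Set ℂ) (hU : IsOpen U) (hUc : IsConnected U)
    (f g : ℂ → ℂ) (hf : AnalyticOnNhd ℂ f U) (hg : AnalyticOnNhd ℂ g U)
    (hf' : ∀ z ∈ U, deriv f z ≠ 0) (hg' : ∀ z ∈ U, deriv g z ≠ 0)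
    (hS : ∀ z ∈ U, schwarzian f z = schwarzian g z) :
    ∃ a b c d : ℂ, a * d - b * c ≠ 0 ∧
      ∀ z ∈ U, c * f z + d ≠ 0 ∧ g z = (a * f z + b) / (c * f z + d) := by
  have hUp := hUc.isPreconnected
  obtain ⟨K, hK⟩ := exists_preSchwarzian_sub_div_two_sq_eq hU hUp hf hg hf' hg' hS
  rcases eq_or_ne K 0 with rfl | hK₀
  · have hP : EqOn (preSchwarzian f) (preSchwarzian g) U := fun z hz ↦ by
      simpa [sub_eq_zero] using hK z hz
    obtain ⟨a, b, ha, hab⟩ := exists_eqOn_affine_of_preSchwarzian_eqOn hU hUp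
      hf.differentiableOn hg.differentiableOn hf.deriv.differentiableOn
      hg.deriv.differentiableOn hf' hg' hP
    exact ⟨a, b, 0, 1, by simpa using ha, fun z hz ↦ ⟨by simp, by simpa using hab hz⟩⟩
  · obtain ⟨p, q, hpq⟩ := exists_sub_mul_sub_eq_neg_inv hU hUp hf hg hf' hg' hS hK₀ hK
    have hk : -K⁻¹ ≠ 0 := neg_ne_zero.mpr (inv_ne_zero hK₀)
    refine ⟨q, -K⁻¹ - p * q, 1, -p, ?_, fun z hz ↦ eq_mobius_of_sub_mul_sub_eq hk (hpq z hz)⟩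
    convert inv_ne_zero hK₀ using 1
    ring
end

section
/- Let U ⊆ ℂ be a nonempty open set which is simply connected (as a topological subspace), and let q : ℂ → ℂ be complex analytic on a neighborhood of each point of U. Then there exist functions u₁, u₂ : ℂ → ℂ, complex analytic on a neighborhood of each point of U, such that on U both satisfy the linear ODE u''(z) = −(q(z)/2)·u(z), and their Wronskian is identically 1 on U: deriv u₁ z · u₂ z − u₁ z · deriv u₂ z = 1 for all z ∈ U. (Consequently the equation Sf = q for the Schwarzian derivative is solvable by the quotient f = u₁/u₂ on U.) -/
/-!
For `A` analytic with values in a Banach algebra, `Y' = A Y` with `Y = 1` at the centre becomes the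
recursion `(n + 1) y (n + 1) = ∑ a k y (n - k)` for the Taylor coefficients. It is dominated by a
geometric series, so there is an invertible solution on a small ball around every point. Two
invertible solutions `Y`, `Z` on a connected set differ by a constant right factor, because `Z⁻¹ Y`
has derivative zero. Hence the local solutions are charts of a principal bundle with discrete fibre,
that is, a covering space; over a simply connected set it has a section, which is a global solution.

For the companion system of `u'' = Q u` this gives solutions with prescribed initial values. The
Wronskian of two of them is constant, and the initial data `(0, 1)` and `(1, 0)` make it `1`.
-/

open Filter Topology Set

section PowerSeries

variable {𝕜 E : Type*} [NontriviallyNormedField 𝕜] [NormedAddCommGroup E] [NormedSpace 𝕜 E]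

lemma exists_norm_coeff_le_pow_succ {p : FormalMultilinearSeries 𝕜 𝕜 E}
    (hp : 0 < p.radius) : ∃ R : ℝ, ∀ n, ‖p.coeff n‖ ≤ R ^ (n + 1) := by
  obtain ⟨C, r, hC, hr, hCr⟩ := p.le_mul_pow_of_radius_pos hp
  refine ⟨max C r, fun n ↦ ?_⟩
  calc ‖p.coeff n‖ ≤ C * r ^ n := by simpa using hCr n
    _ ≤ max C r * max C r ^ n := by gcongr <;> simp
    _ = max C r ^ (n + 1) := (pow_succ' _ n).symm

lemma eventually_hasSum_deriv [CompleteSpace E] {f : 𝕜 → E} {p : FormalMultilinearSeries 𝕜 𝕜 E}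
    {c : 𝕜} (hf : HasFPowerSeriesAt f p c) :
    ∀ᶠ z in 𝓝 c, HasSum (fun n ↦ (z - c) ^ n • (n + 1) • p.coeff (n + 1)) (deriv f z) := by
  obtain ⟨r, hr⟩ := hf
  filter_upwards [hasFPowerSeriesAt_iff'.1 hr.fderiv.hasFPowerSeriesAt] with z hz
  simpa [FormalMultilinearSeries.derivSeries_coeff_one] using
    hz.mapL (ContinuousLinearMap.apply 𝕜 E (1 : 𝕜))

variable {𝔸 : Type*} [NormedRing 𝔸] [NormedAlgebra 𝕜 𝔸] [CompleteSpace 𝔸]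

lemma eventually_hasSum_mul {f g : 𝕜 → 𝔸} {p q : FormalMultilinearSeries 𝕜 𝕜 𝔸} {c : 𝕜}
    (hf : HasFPowerSeriesAt f p c) (hg : HasFPowerSeriesAt g q c) :
    ∀ᶠ z in 𝓝 c, HasSum
      (fun n ↦ (z - c) ^ n • ∑ k ∈ Finset.range (n + 1), p.coeff k * q.coeff (n - k))
      (f z * g z) := by
  have summable_norm {h : 𝕜 → 𝔸} {s : FormalMultilinearSeries 𝕜 𝕜 𝔸}
      (hh : HasFPowerSeriesAt h s c) : ∀ᶠ z in 𝓝 c, Summable fun n ↦ ‖(z - c) ^ n • s.coeff n‖ := by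
    have hball : Metric.eball c s.radius ∈ 𝓝 c := Metric.eball_mem_nhds c hh.radius_pos
    filter_upwards [hball] with z hz
    have hz' : z - c ∈ Metric.eball 0 s.radius := by
      simpa [edist_eq_enorm_sub] using hz
    simpa using s.summable_norm_apply hz'
  filter_upwards [hasFPowerSeriesAt_iff'.1 hf, hasFPowerSeriesAt_iff'.1 hg, summable_norm hf,
    summable_norm hg] with z hfz hgz hpz hqz
  rw [← hfz.tsum_eq, ← hgz.tsum_eq]
  convert (hasSum_sum_range_mul_of_summable_norm hpz hqz) using 2 with n
  rw [Finset.smul_sum]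
  refine Finset.sum_congr rfl fun k hk ↦ ?_
  rw [smul_mul_smul_comm, ← pow_add, Nat.add_sub_of_le (Finset.mem_range_succ_iff.1 hk)]

lemma exists_hasFPowerSeriesAt_of_norm_le_geometric [CompleteSpace E] {a : ℕ → E} {C R : ℝ}
    (ha : ∀ n, ‖a n‖ ≤ C * R ^ n) (c : 𝕜) :
    ∃ (f : 𝕜 → E) (p : FormalMultilinearSeries 𝕜 𝕜 E),
      HasFPowerSeriesAt f p c ∧ ∀ n, p.coeff n = a n := by
  let p : FormalMultilinearSeries 𝕜 𝕜 E :=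
    fun n ↦ ContinuousMultilinearMap.mkPiRing 𝕜 (Fin n) (a n)
  have hp (n : ℕ) : p.coeff n = a n := by
    simp [p, FormalMultilinearSeries.coeff]
  refine ⟨fun z ↦ ∑' n, (z - c) ^ n • a n, p, hasFPowerSeriesAt_iff'.2 ?_, hp⟩
  have hsmall : ∀ᶠ z in 𝓝 c, ‖z - c‖ * |R| < 1 := by
    have hcont : Continuous fun z : 𝕜 ↦ ‖z - c‖ * |R| := by fun_prop
    exact hcont.continuousAt.eventually_lt_const (by simp)
  filter_upwards [hsmall] with z hz
  simp only [hp]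
  refine Summable.hasSum (Summable.of_norm_bounded
    ((summable_geometric_of_lt_one (by positivity) hz).mul_left |C|) fun n ↦ ?_)
  calc ‖(z - c) ^ n • a n‖ = ‖z - c‖ ^ n * ‖a n‖ := by rw [norm_smul, norm_pow]
    _ ≤ ‖z - c‖ ^ n * |C * R ^ n| := by gcongr; exact (ha n).trans (le_abs_self _)
    _ = |C| * (‖z - c‖ * |R|) ^ n := by rw [abs_mul, abs_pow]; ring

end PowerSeries

section FundamentalSolution

variable {𝕜 𝔸 : Type*} [NontriviallyNormedField 𝕜] [NormedRing 𝔸] [NormedAlgebra 𝕜 𝔸]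

/-- The unit-valued function `Y` is analytic at `z` and satisfies `Y' = A Y` there. For
`𝔸 = E →L[𝕜] E`, such a `Y` is a fundamental solution of the linear system `y' = A y`. -/
structure IsFundamentalSolutionAt (A : 𝕜 → 𝔸) (Y : 𝕜 → 𝔸ˣ) (z : 𝕜) : Prop where
  analyticAt : AnalyticAt 𝕜 (fun w ↦ (Y w : 𝔸)) z
  deriv_eq : deriv (fun w ↦ (Y w : 𝔸)) z = A z * Y z

namespace IsFundamentalSolutionAt

variable {A : 𝕜 → 𝔸} {Y Z : 𝕜 → 𝔸ˣ} {z : 𝕜}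

lemma hasDerivAt (hY : IsFundamentalSolutionAt A Y z) :
    HasDerivAt (fun w ↦ (Y w : 𝔸)) (A z * Y z) z :=
  hY.deriv_eq ▸ hY.analyticAt.differentiableAt.hasDerivAt

lemma congr (hY : IsFundamentalSolutionAt A Y z) (h : Z =ᶠ[𝓝 z] Y) :
    IsFundamentalSolutionAt A Z z := by
  have hval : (fun w ↦ (Z w : 𝔸)) =ᶠ[𝓝 z] fun w ↦ (Y w : 𝔸) := h.fun_comp Units.val
  exact ⟨hY.analyticAt.congr hval.symm, by rw [hval.deriv_eq, hY.deriv_eq, h.eq_of_nhds]⟩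

lemma mul_const (hY : IsFundamentalSolutionAt A Y z) (g : 𝔸ˣ) :
    IsFundamentalSolutionAt A (fun w ↦ Y w * g) z where
  analyticAt := by simpa using hY.analyticAt.fun_mul analyticAt_const
  deriv_eq := by simpa [mul_assoc] using (hY.hasDerivAt.mul_const (g : 𝔸)).deriv

variable [CompleteSpace 𝔸]

lemma hasDerivAt_inv (hY : IsFundamentalSolutionAt A Y z) :
    HasDerivAt (fun w ↦ ((Y w)⁻¹ : 𝔸ˣ).val) (-((Y z)⁻¹ * A z)) z := by
  have h := (hasFDerivAt_ringInverse (𝕜 := 𝕜) (Y z)).comp_hasDerivAt z hY.hasDerivAt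
  simpa [Function.comp_def, mul_assoc] using h

end IsFundamentalSolutionAt

end FundamentalSolution

section LocalExistence

variable {𝕜 𝔸 : Type*} [RCLike 𝕜] [NormedRing 𝔸] [NormedAlgebra 𝕜 𝔸]

variable (𝕜) in
/-- Taylor coefficients of the solution of `Y' = A Y` with `Y = 1` at the centre of expansion, where
`a` is the sequence of Taylor coefficients of `A`. -/
noncomputable def fundamentalCoeff (a : ℕ → 𝔸) : ℕ → 𝔸
  | 0 => 1
  | n + 1 => ((n + 1 : ℕ) : 𝕜)⁻¹ • ∑ k : Fin (n + 1), a k * fundamentalCoeff a (n - k)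

lemma succ_nsmul_fundamentalCoeff (a : ℕ → 𝔸) (n : ℕ) :
    (n + 1) • fundamentalCoeff 𝕜 a (n + 1) =
      ∑ k ∈ Finset.range (n + 1), a k * fundamentalCoeff 𝕜 a (n - k) := by
  rw [fundamentalCoeff, ← Nat.cast_smul_eq_nsmul 𝕜,
    smul_inv_smul₀ (Nat.cast_ne_zero.2 n.succ_ne_zero), Finset.sum_range]

lemma norm_fundamentalCoeff_le {a : ℕ → 𝔸} {R : ℝ} (ha : ∀ n, ‖a n‖ ≤ R ^ (n + 1)) (n : ℕ) :
    ‖fundamentalCoeff 𝕜 a n‖ ≤ ‖(1 : 𝔸)‖ * R ^ n := by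
  induction n using Nat.strong_induction_on with
  | _ n ih =>
    obtain _ | n := n
    · simp [fundamentalCoeff]
    -- All `n + 1` terms have the same bound, which absorbs the factor `n + 1` of the recursion.
    have hterm : ∀ k ∈ Finset.range (n + 1), ‖a k * fundamentalCoeff 𝕜 a (n - k)‖ ≤
        ‖(1 : 𝔸)‖ * R ^ (n + 1) := fun k hk ↦ by
      have hkn : k ≤ n := Finset.mem_range_succ_iff.1 hk
      calc ‖a k * fundamentalCoeff 𝕜 a (n - k)‖
          ≤ R ^ (k + 1) * (‖(1 : 𝔸)‖ * R ^ (n - k)) :=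
            norm_mul_le_of_le (ha k) (ih _ (by lia))
        _ = ‖(1 : 𝔸)‖ * R ^ (n + 1) := by
            rw [mul_left_comm, ← pow_add, show k + 1 + (n - k) = n + 1 by lia]
    have hnorm : ‖(n + 1) • fundamentalCoeff 𝕜 a (n + 1)‖ =
        (n + 1 : ℕ) * ‖fundamentalCoeff 𝕜 a (n + 1)‖ := by
      rw [← Nat.cast_smul_eq_nsmul 𝕜, norm_smul, RCLike.norm_natCast]
    refine le_of_mul_le_mul_left ?_ (Nat.cast_pos.2 n.succ_pos : (0 : ℝ) < (n + 1 : ℕ))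
    rw [← hnorm, succ_nsmul_fundamentalCoeff]
    simpa using norm_sum_le_of_le _ hterm

variable [CompleteSpace 𝔸]

lemma exists_analyticAt_deriv_eq_mul {A : 𝕜 → 𝔸} {c : 𝕜} (hA : AnalyticAt 𝕜 A c) :
    ∃ Y : 𝕜 → 𝔸, AnalyticAt 𝕜 Y c ∧ Y c = 1 ∧ ∀ᶠ z in 𝓝 c, deriv Y z = A z * Y z := by
  obtain ⟨p, hp⟩ := hA
  obtain ⟨R, hR⟩ := exists_norm_coeff_le_pow_succ hp.radius_pos
  obtain ⟨Y, q, hY, hq⟩ := exists_hasFPowerSeriesAt_of_norm_le_geometric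
    (norm_fundamentalCoeff_le (𝕜 := 𝕜) hR) c
  refine ⟨Y, hY.analyticAt, ?_, ?_⟩
  · exact (hY.coeff_zero _).symm.trans ((hq 0).trans (by rw [fundamentalCoeff]))
  · filter_upwards [eventually_hasSum_deriv hY, eventually_hasSum_mul hp hY] with z hderiv hmul
    refine hderiv.unique ?_
    simpa only [hq, succ_nsmul_fundamentalCoeff] using hmul

lemma IsFundamentalSolutionAt.inv_mul_eq_of_isPreconnected {A : 𝕜 → 𝔸} {Y Z : 𝕜 → 𝔸ˣ} {S : Set 𝕜}
    (hS : IsOpen S) (hSc : IsPreconnected S)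
    (hY : ∀ z ∈ S, IsFundamentalSolutionAt A Y z) (hZ : ∀ z ∈ S, IsFundamentalSolutionAt A Z z)
    {x y : 𝕜} (hx : x ∈ S) (hy : y ∈ S) :
    (Z x)⁻¹ * Y x = (Z y)⁻¹ * Y y := by
  have hderiv (z : 𝕜) (hz : z ∈ S) : HasDerivAt (fun w ↦ ((Z w)⁻¹ : 𝔸ˣ).val * (Y w).val) 0 z := by
    simpa [mul_assoc] using (hZ z hz).hasDerivAt_inv.fun_mul (hY z hz).hasDerivAt
  ext
  exact hS.is_const_of_deriv_eq_zero hSc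
    (fun z hz ↦ (hderiv z hz).differentiableAt.differentiableWithinAt)
    (fun z hz ↦ (hderiv z hz).deriv) hx hy

lemma exists_ball_isFundamentalSolutionAt {A : 𝕜 → 𝔸} {c : 𝕜} (hA : AnalyticAt 𝕜 A c) :
    ∃ r > 0, ∃ Y : 𝕜 → 𝔸ˣ, ∀ z ∈ Metric.ball c r, IsFundamentalSolutionAt A Y z := by
  obtain ⟨Y, hY, hYc, hderiv⟩ := exists_analyticAt_deriv_eq_mul hA
  have hunit : ∀ᶠ z in 𝓝 c, IsUnit (Y z) :=
    hY.continuousAt.eventually (Units.isOpen.mem_nhds (by simp [hYc]))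
  classical
  let Y' : 𝕜 → 𝔸ˣ := fun z ↦ if h : IsUnit (Y z) then h.unit else 1
  have hval : ∀ᶠ z in 𝓝 c, (Y' z : 𝔸) = Y z :=
    hunit.mono fun z hz ↦ by simp [Y', hz]
  suffices h : ∀ᶠ z in 𝓝 c, IsFundamentalSolutionAt A Y' z by
    obtain ⟨r, hr, hball⟩ := Metric.eventually_nhds_iff_ball.1 h
    exact ⟨r, hr, Y', hball⟩
  filter_upwards [hY.eventually_analyticAt, hderiv, hval.eventually_nhds] with z hz hdz hYz
  exact ⟨hz.congr (EventuallyEq.symm hYz), by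
    rw [EventuallyEq.deriv_eq hYz, hdz, hYz.self_of_nhds]⟩

end LocalExistence

section Gluing

open Bundle

variable {X : Type*} [TopologicalSpace X]

lemma exists_continuous_section_of_discreteTopology [SimplyConnectedSpace X]
    [LocallyPathConnectedSpace X] (F : Type*) (E : X → Type*) [TopologicalSpace F]
    [DiscreteTopology F] [TopologicalSpace (TotalSpace F E)] [∀ x, TopologicalSpace (E x)]
    [FiberBundle F E] [Nonempty F] :
    ∃ s : ∀ x, E x, Continuous fun x ↦ TotalSpace.mk' F x (s x) := by
  have hcov : IsCoveringMap (π F E) := FiberBundle.isCoveringMap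
  obtain ⟨x₀⟩ : Nonempty X := inferInstance
  have hx₀ : x₀ ∈ (trivializationAt F E x₀).baseSet := FiberBundle.mem_baseSet_trivializationAt' x₀
  obtain ⟨S, ⟨-, hS⟩, -⟩ := hcov.existsUnique_continuousMap_lifts (.id X) x₀ _
    ((trivializationAt F E x₀).proj_symm_apply' (x := Classical.arbitrary F) hx₀)
  have hproj (x : X) : (S x).proj = x := congrFun hS x
  refine ⟨fun x ↦ hproj x ▸ (S x).snd, S.continuous.congr fun x ↦ ?_⟩
  ext
  · exact hproj x
  · simp

lemma exists_eventually_coordChange_eq_const [SimplyConnectedSpace X]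
    [LocallyPathConnectedSpace X] {ι F : Type*} [TopologicalSpace F] [DiscreteTopology F]
    [Nonempty F] (Z : FiberBundleCore ι X F) :
    ∃ s : X → F, ∀ i, ∀ x ∈ Z.baseSet i, ∃ v,
      ∀ᶠ x' in 𝓝 x, Z.coordChange (Z.indexAt x') i x' (s x') = v := by
  obtain ⟨s, hs⟩ := exists_continuous_section_of_discreteTopology F Z.Fiber
  refine ⟨s, fun i x hx ↦ ⟨Z.coordChange (Z.indexAt x) i x (s x), ?_⟩⟩
  have hlift : ContinuousAt (fun x' ↦ TotalSpace.mk' F x' (s x')) x := hs.continuousAt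
  have hcont : ContinuousAt (fun x' ↦ Z.coordChange (Z.indexAt x') i x' (s x')) x :=
    (((Z.localTriv i).continuousAt ((Z.mem_localTriv_source i (.mk' F x (s x))).2 hx)).comp_of_eq
      hlift rfl).snd
  exact tendsto_pure.1 (by simpa only [ContinuousAt, nhds_discrete] using hcont)

/-- The principal bundle with discrete fibre `G` whose transition maps are the left translations by
`(y j x)⁻¹ * y i x`, for a family of local functions `y i` that differ by constant right factors on
overlaps; `idx` chooses a chart around every point. -/
def transitionCore {ι G : Type*} [Group G] [TopologicalSpace G]
    [DiscreteTopology G] {B : ι → Set X} (hB : ∀ i, IsOpen (B i)) {idx : X → ι}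
    (hidx : ∀ x, x ∈ B (idx x)) {y : ι → X → G}
    (hy : ∀ i j, ∀ x ∈ B i ∩ B j, ∀ x' ∈ B i ∩ B j,
      (y j x)⁻¹ * y i x = (y j x')⁻¹ * y i x') : FiberBundleCore ι X G where
  baseSet := B
  isOpen_baseSet := hB
  indexAt := idx
  mem_baseSet_at := hidx
  coordChange i j x g := (y j x)⁻¹ * y i x * g
  coordChange_self := by simp
  coordChange_comp := by simp [mul_assoc]
  continuousOn_coordChange i j := by
    rintro ⟨x, g⟩ ⟨hx, -⟩
    have hconst : Continuous fun p : X × G ↦ (y j x)⁻¹ * y i x * p.2 :=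
      continuous_of_discreteTopology.comp continuous_snd
    refine hconst.continuousOn.congr (fun p hp ↦ ?_) _ ⟨hx, mem_univ g⟩
    rw [hy i j p.1 hp.1 x hx]

lemma exists_eventually_eq_mul_const [SimplyConnectedSpace X] [LocallyPathConnectedSpace X]
    {ι G : Type*} [Group G] {B : ι → Set X} (hB : ∀ i, IsOpen (B i))
    (hcover : ∀ x, ∃ i, x ∈ B i) {y : ι → X → G}
    (hy : ∀ i j, ∀ x ∈ B i ∩ B j, ∀ x' ∈ B i ∩ B j,
      (y j x)⁻¹ * y i x = (y j x')⁻¹ * y i x') :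
    ∃ s : X → G, ∀ i, ∀ x ∈ B i, ∃ g, ∀ᶠ x' in 𝓝 x, s x' = y i x' * g := by
  let _ : TopologicalSpace G := ⊥
  have : DiscreteTopology G := ⟨rfl⟩
  choose idx hidx using hcover
  obtain ⟨s, hs⟩ := exists_eventually_coordChange_eq_const (transitionCore hB hidx hy)
  refine ⟨fun x ↦ y (idx x) x * s x, fun i x hx ↦ ?_⟩
  obtain ⟨g, hg⟩ := hs i x hx
  refine ⟨g, hg.mono fun x' hx' ↦ ?_⟩
  rw [← hx']
  simp [transitionCore, mul_assoc]

end Gluing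

section GlobalExistence

variable {𝕜 : Type*} [RCLike 𝕜] {U : Set 𝕜}

theorem exists_isFundamentalSolutionAt_of_simplyConnected {𝔸 : Type*} [NormedRing 𝔸]
    [NormedAlgebra 𝕜 𝔸] [CompleteSpace 𝔸] (hU : IsOpen U) [SimplyConnectedSpace U] {A : 𝕜 → 𝔸}
    (hA : AnalyticOnNhd 𝕜 A U) :
    ∃ Y : 𝕜 → 𝔸ˣ, ∀ z ∈ U, IsFundamentalSolutionAt A Y z := by
  have := hU.locallyPathConnectedSpace
  choose r hr Y hY using fun c : U ↦ exists_ball_isFundamentalSolutionAt (hA c c.2)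
  have hconst (c d : U) {x y : 𝕜} (hx : x ∈ Metric.ball (c : 𝕜) (r c) ∩ Metric.ball (d : 𝕜) (r d))
      (hy : y ∈ Metric.ball (c : 𝕜) (r c) ∩ Metric.ball (d : 𝕜) (r d)) :
      (Y d x)⁻¹ * Y c x = (Y d y)⁻¹ * Y c y :=
    IsFundamentalSolutionAt.inv_mul_eq_of_isPreconnected
      (Metric.isOpen_ball.inter Metric.isOpen_ball)
      ((convex_ball _ _).inter (convex_ball _ _)).isPreconnected
      (fun z hz ↦ hY c z hz.1) (fun z hz ↦ hY d z hz.2) hx hy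
  obtain ⟨s, hs⟩ := exists_eventually_eq_mul_const (y := fun c (x : U) ↦ Y c x)
    (fun c ↦ Metric.isOpen_ball.preimage continuous_subtype_val)
    (fun c ↦ ⟨c, Metric.mem_ball_self (hr c)⟩) (fun c d x hx y hy ↦ hconst c d hx hy)
  refine ⟨Function.extend Subtype.val s 1, fun z hz ↦ ?_⟩
  have hzr : z ∈ Metric.ball z (r ⟨z, hz⟩) := Metric.mem_ball_self (hr _)
  obtain ⟨g, hg⟩ := hs ⟨z, hz⟩ ⟨z, hz⟩ hzr
  refine ((hY ⟨z, hz⟩ z hzr).mul_const g).congr ?_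
  rw [nhds_subtype_eq_comap, eventually_comap] at hg
  filter_upwards [hg, hU.mem_nhds hz] with w hw hwU
  rw [← hw ⟨w, hwU⟩ rfl]
  exact Subtype.val_injective.extend_apply s 1 ⟨w, hwU⟩

variable {E : Type*} [NormedAddCommGroup E] [NormedSpace 𝕜 E]

/-- The operator `(u, v) ↦ (v, T u)`, which turns the second-order equation `u'' = T u` into a
first-order system for the pair `(u, u')`. -/
def companion (T : E →L[𝕜] E) : E × E →L[𝕜] E × E :=
  .inl 𝕜 E E ∘L .snd 𝕜 E E + .inr 𝕜 E E ∘L T ∘L .fst 𝕜 E E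

lemma analyticAt_companion {T : 𝕜 → E →L[𝕜] E} {z : 𝕜} (hT : AnalyticAt 𝕜 T z) :
    AnalyticAt 𝕜 (fun w ↦ companion (T w)) z := by
  let L : (E →L[𝕜] E) →L[𝕜] E × E →L[𝕜] E × E :=
    ((ContinuousLinearMap.inr 𝕜 E E).postcomp (E × E)).comp
      ((ContinuousLinearMap.fst 𝕜 E E).precomp E)
  exact analyticAt_const.add ((L.analyticAt _).comp hT)

variable [CompleteSpace E]

theorem exists_analyticOnNhd_hasDerivAt_linear (hU : IsOpen U) [SimplyConnectedSpace U]
    {A : 𝕜 → E →L[𝕜] E} (hA : AnalyticOnNhd 𝕜 A U) (z₀ : 𝕜) (y₀ : E) :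
    ∃ y : 𝕜 → E, AnalyticOnNhd 𝕜 y U ∧ y z₀ = y₀ ∧ ∀ z ∈ U, HasDerivAt y (A z (y z)) z := by
  obtain ⟨Y, hY⟩ := exists_isFundamentalSolutionAt_of_simplyConnected hU hA
  let v : E := ((Y z₀)⁻¹ : (E →L[𝕜] E)ˣ).val y₀
  refine ⟨fun z ↦ (Y z).val v, fun z hz ↦ ?_, ?_, fun z hz ↦ ?_⟩
  · exact ((ContinuousLinearMap.apply 𝕜 E v).analyticAt _).comp (hY z hz).analyticAt
  · exact DFunLike.congr_fun (Y z₀).mul_inv y₀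
  · simpa using (hY z hz).hasDerivAt.clm_apply (hasDerivAt_const z v)

theorem exists_analyticOnNhd_deriv_deriv_eq (hU : IsOpen U) [SimplyConnectedSpace U]
    {T : 𝕜 → E →L[𝕜] E} (hT : AnalyticOnNhd 𝕜 T U) {z₀ : 𝕜} (hz₀ : z₀ ∈ U) (α β : E) :
    ∃ u : 𝕜 → E, AnalyticOnNhd 𝕜 u U ∧ u z₀ = α ∧ deriv u z₀ = β ∧
      ∀ z ∈ U, deriv (deriv u) z = T z (u z) := by
  obtain ⟨y, hy, hy₀, hderiv⟩ := exists_analyticOnNhd_hasDerivAt_linear hU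
    (fun z hz ↦ analyticAt_companion (hT z hz)) z₀ (α, β)
  have hfst (z : 𝕜) (hz : z ∈ U) : deriv (fun w ↦ (y w).1) z = (y z).2 := by
    simpa [companion, Function.comp_def] using
      (hasFDerivAt_fst.comp_hasDerivAt_of_eq z (hderiv z hz) rfl).deriv
  refine ⟨fun z ↦ (y z).1, fun z hz ↦ analyticAt_fst.comp (hy z hz), by simp [hy₀],
    by simp [hfst z₀ hz₀, hy₀], fun z hz ↦ ?_⟩
  have hfst' : deriv (fun w ↦ (y w).1) =ᶠ[𝓝 z] fun w ↦ (y w).2 :=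
    eventually_of_mem (hU.mem_nhds hz) hfst
  rw [hfst'.deriv_eq]
  simpa [companion, Function.comp_def] using
    (hasFDerivAt_snd.comp_hasDerivAt_of_eq z (hderiv z hz) rfl).deriv

end GlobalExistence

section Wronskian

variable {𝕜 𝔸 : Type*}

/-- The Wronskian of `u` and `v`, with the sign `u' v - u v'` for which the quotient `u / v` has
derivative `wronskian u v / v ^ 2`. -/
noncomputable def wronskian [NontriviallyNormedField 𝕜] [NormedRing 𝔸] [NormedAlgebra 𝕜 𝔸]
    (u v : 𝕜 → 𝔸) (z : 𝕜) : 𝔸 :=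
  deriv u z * v z - u z * deriv v z

lemma hasDerivAt_wronskian [NontriviallyNormedField 𝕜] [NormedRing 𝔸] [NormedAlgebra 𝕜 𝔸]
    [CompleteSpace 𝔸] {u v : 𝕜 → 𝔸} {z : 𝕜} (hu : AnalyticAt 𝕜 u z) (hv : AnalyticAt 𝕜 v z) :
    HasDerivAt (wronskian u v) (deriv (deriv u) z * v z - u z * deriv (deriv v) z) z := by
  have h := (hu.deriv.differentiableAt.hasDerivAt.fun_mul hv.differentiableAt.hasDerivAt).fun_sub
    (hu.differentiableAt.hasDerivAt.fun_mul hv.deriv.differentiableAt.hasDerivAt)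
  exact h.congr_deriv (by abel)

lemma wronskian_eq_of_isPreconnected [RCLike 𝕜] [NormedCommRing 𝔸] [NormedAlgebra 𝕜 𝔸]
    [CompleteSpace 𝔸] {U : Set 𝕜} (hU : IsOpen U) (hUc : IsPreconnected U) {u v Q : 𝕜 → 𝔸}
    (hu : AnalyticOnNhd 𝕜 u U) (hv : AnalyticOnNhd 𝕜 v U)
    (hu' : ∀ z ∈ U, deriv (deriv u) z = Q z * u z) (hv' : ∀ z ∈ U, deriv (deriv v) z = Q z * v z)
    {x y : 𝕜} (hx : x ∈ U) (hy : y ∈ U) : wronskian u v x = wronskian u v y := by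
  have hderiv (z : 𝕜) (hz : z ∈ U) : HasDerivAt (wronskian u v) 0 z :=
    (hasDerivAt_wronskian (hu z hz) (hv z hz)).congr_deriv (by rw [hu' z hz, hv' z hz]; ring)
  exact hU.is_const_of_deriv_eq_zero hUc
    (fun z hz ↦ (hderiv z hz).differentiableAt.differentiableWithinAt)
    (fun z hz ↦ (hderiv z hz).deriv) hx hy

end Wronskian

theorem exists_ode_solutions_general {𝕜 : Type*} [RCLike 𝕜] {U : Set 𝕜} (hU : IsOpen U)
    [SimplyConnectedSpace U] {Q : 𝕜 → 𝕜} (hQ : AnalyticOnNhd 𝕜 Q U) :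
    ∃ u₁ u₂ : 𝕜 → 𝕜, AnalyticOnNhd 𝕜 u₁ U ∧ AnalyticOnNhd 𝕜 u₂ U ∧
      (∀ z ∈ U, deriv (deriv u₁) z = Q z * u₁ z) ∧
      (∀ z ∈ U, deriv (deriv u₂) z = Q z * u₂ z) ∧ ∀ z ∈ U, wronskian u₁ u₂ z = 1 := by
  obtain ⟨⟨z₀, hz₀⟩⟩ : Nonempty U := inferInstance
  have hUc : IsPreconnected U := isPreconnected_iff_preconnectedSpace.2 inferInstance
  have hT : AnalyticOnNhd 𝕜 (fun z ↦ Q z • ContinuousLinearMap.id 𝕜 𝕜) U :=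
    hQ.smul analyticOnNhd_const
  obtain ⟨u₁, h₁, h₁0, h₁1, hode₁⟩ := exists_analyticOnNhd_deriv_deriv_eq hU hT hz₀ 0 1
  obtain ⟨u₂, h₂, h₂0, h₂1, hode₂⟩ := exists_analyticOnNhd_deriv_deriv_eq hU hT hz₀ 1 0
  refine ⟨u₁, u₂, h₁, h₂, hode₁, hode₂, fun z hz ↦ ?_⟩
  rw [wronskian_eq_of_isPreconnected hU hUc h₁ h₂ hode₁ hode₂ hz hz₀]
  simp [wronskian, h₁0, h₁1, h₂0, h₂1]

/-- On a nonempty simply connected open set, the ODE `u'' = −(q/2)·u` admits two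
holomorphic solutions with Wronskian identically `1` (so `Sf = q` is solvable by
`f = u₁/u₂`). -/
theorem exists_ode_solutions (U : Set ℂ) (hne : U.Nonempty) (hU : IsOpen U)
    (hsc : SimplyConnectedSpace U)
    (q : ℂ → ℂ) (hq : AnalyticOnNhd ℂ q U) :
    ∃ u₁ u₂ : ℂ → ℂ,
      AnalyticOnNhd ℂ u₁ U ∧ AnalyticOnNhd ℂ u₂ U ∧
      (∀ z ∈ U, deriv (deriv u₁) z = -(q z / 2) * u₁ z) ∧
      (∀ z ∈ U, deriv (deriv u₂) z = -(q z / 2) * u₂ z) ∧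
      (∀ z ∈ U, deriv u₁ z * u₂ z - u₁ z * deriv u₂ z = 1) :=
  exists_ode_solutions_general hU fun z hz ↦ (hq z hz).div_const.neg
end
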